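/- Let U ⊆ ℂ be an open set, V : ℂ → ℂ differentiable on U, and λ ∈ ℂ. Let ζ₀ : ℂ → ℂ be twice differentiable on U with ζ₀'(x) = V(x) − ζ₀(x)², let ζ_λ : ℂ → ℂ be twice differentiable on U with ζ_λ'(x) = V(x) − λ − ζ_λ(x)², with ζ_λ(x) ≠ ζ₀(x) on U, and let G : ℂ → ℂ be differentiable on U with G'(x) = ζ_λ(x) on U. Define V₊ = −ζ₀' + ζ₀², ζ⁺_λ = ζ_λ + (ζ_λ' − ζ₀')/(ζ_λ − ζ₀), and R⁺(ζ, x) = exp(−2·G(x)) / ((ζ_λ(x) − ζ₀(x))²·(−ζ + ζ⁺_λ(x))²). Then R⁺ is an integrating factor of the transformed vector field X⁺ = (V₊(x) − λ − ζ²)·∂/∂ζ + ∂/∂x: at every point (ζ, x) with x ∈ U and ζ ≠ ζ⁺_λ(x), ∂/∂ζ [R⁺(ζ,x)·(V₊(x) − λ − ζ²)] + ∂/∂x [R⁺(ζ,x)] = 0. -/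

import Mathlib

/-!
If `p` solves the Riccati equation `p' = a - p²` and `E' = -2 p E`, then `E / (-ζ + p)²` is an
integrating factor of `(a - ζ²) ∂/∂ζ + ∂/∂x`. The Darboux transformation preserves such data:
`ζ⁺ = -ζ₀ - lam / (ζl - ζ₀)` solves the Riccati equation of the potential `V₊ - lam`, and since
`ζ⁺ - ζl` is the logarithmic derivative of `ζl - ζ₀`, the weight `exp (-2 ∫ ζ⁺)` is
`exp (-2 ∫ ζl) / (ζl - ζ₀)²` up to a constant.
-/

section Darboux

variable {𝕜 F : Type*} [NontriviallyNormedField 𝕜] [NontriviallyNormedField F] [NormedAlgebra 𝕜 F]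

/-- `R` satisfies at the point `(ζ, x)` the equation `∂(R A)/∂ζ + ∂R/∂x = 0` of an integrating
factor of the vector field `A ∂/∂ζ + ∂/∂x`. Both partial derivatives are required to exist, so the
equation does not hold through a junk value of `deriv`. -/
def IsIntegratingFactorAt (A R : F → 𝕜 → F) (ζ : F) (x : 𝕜) : Prop :=
  ∃ r : F, HasDerivAt (fun w => R w x * A w x) (-r) ζ ∧ HasDerivAt (fun t => R ζ t) r x

/-- `p` solves the Riccati equation `p' = a - p²` at every point of `U`; for `a = V - lam` this is
the equation of the logarithmic derivatives of solutions of `Ψ'' = (V - lam) Ψ`. -/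
def IsRiccatiSolutionOn (a p : 𝕜 → F) (U : Set 𝕜) : Prop :=
  ∀ x ∈ U, HasDerivAt p (a x - p x ^ 2) x

/-- The partner potential `V₊` of the Darboux transformation built from `ζ₀`. -/
noncomputable def darbouxPotential (ζ₀ : 𝕜 → F) (x : 𝕜) : F :=
  -deriv ζ₀ x + ζ₀ x ^ 2

/-- The image `ζ⁺` of the Riccati solution `ζl` under the Darboux transformation built from
`ζ₀`, meaningful where `ζl x ≠ ζ₀ x`. -/
noncomputable def darbouxTransform (ζ₀ ζl : 𝕜 → F) (x : 𝕜) : F :=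
  ζl x + (deriv ζl x - deriv ζ₀ x) / (ζl x - ζ₀ x)

theorem IsIntegratingFactorAt.deriv_add_deriv_eq_zero {A R : F → 𝕜 → F} {ζ : F} {x : 𝕜}
    (h : IsIntegratingFactorAt A R ζ x) :
    deriv (fun w => R w x * A w x) ζ + deriv (fun t => R ζ t) x = 0 := by
  obtain ⟨r, hζ, hx⟩ := h
  rw [hζ.deriv, hx.deriv, neg_add_cancel]

theorem isIntegratingFactorAt_riccati {a p E : 𝕜 → F} {ζ : F} {x : 𝕜}
    (hp : HasDerivAt p (a x - p x ^ 2) x) (hE : HasDerivAt E (-2 * p x * E x) x)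
    (hζ : ζ ≠ p x) :
    IsIntegratingFactorAt (fun w t => a t - w ^ 2) (fun w t => E t / (-w + p t) ^ 2) ζ x := by
  have hq : -ζ + p x ≠ 0 := fun h => hζ (neg_add_eq_zero.mp h)
  have hq2 : (-ζ + p x) ^ 2 ≠ 0 := pow_ne_zero 2 hq
  have hx := hE.fun_div ((hp.const_add (-ζ)).fun_pow 2) hq2
  have hw := ((hasDerivAt_const ζ (E x)).fun_div
    (((hasDerivAt_id' ζ).fun_neg.add_const (p x)).fun_pow 2) hq2).fun_mul
    (((hasDerivAt_id' ζ).fun_pow 2).const_sub (a x))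
  refine ⟨_, hw.congr_deriv ?_, hx⟩
  field_simp
  ring

namespace IsRiccatiSolutionOn

variable {U : Set 𝕜} {V ζ₀ ζl : 𝕜 → F} {lam : F}

theorem darbouxTransform_eq (h₀ : IsRiccatiSolutionOn V ζ₀ U)
    (hl : IsRiccatiSolutionOn (fun x => V x - lam) ζl U) {x : 𝕜} (hx : x ∈ U)
    (hne : ζl x ≠ ζ₀ x) :
    darbouxTransform ζ₀ ζl x = -ζ₀ x - lam / (ζl x - ζ₀ x) := by
  have hd : ζl x - ζ₀ x ≠ 0 := sub_ne_zero.mpr hne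
  rw [darbouxTransform, (h₀ x hx).deriv, (hl x hx).deriv]
  field_simp
  ring

protected theorem darbouxTransform (hU : IsOpen U) (h₀ : IsRiccatiSolutionOn V ζ₀ U)
    (hl : IsRiccatiSolutionOn (fun x => V x - lam) ζl U) (hne : ∀ x ∈ U, ζl x ≠ ζ₀ x) :
    IsRiccatiSolutionOn (fun x => darbouxPotential ζ₀ x - lam) (darbouxTransform ζ₀ ζl) U := by
  intro x hx
  have hd : ζl x - ζ₀ x ≠ 0 := sub_ne_zero.mpr (hne x hx)
  have hEq : Set.EqOn (darbouxTransform ζ₀ ζl) (fun t => -ζ₀ t - lam / (ζl t - ζ₀ t)) U :=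
    fun t ht => h₀.darbouxTransform_eq hl ht (hne t ht)
  have hderiv := (h₀ x hx).fun_neg.fun_sub
    ((hasDerivAt_const x lam).fun_div ((hl x hx).fun_sub (h₀ x hx)) hd)
  refine (hderiv.congr_of_eventuallyEq (hEq.eventuallyEq_of_mem (hU.mem_nhds hx))).congr_deriv ?_
  simp only [hEq hx, darbouxPotential, (h₀ x hx).deriv]
  field_simp
  ring

end IsRiccatiSolutionOn

theorem hasDerivAt_div_sub_sq_darbouxTransform {ζ₀ ζl E : 𝕜 → F} {x : 𝕜}
    (h₀ : DifferentiableAt 𝕜 ζ₀ x) (hl : DifferentiableAt 𝕜 ζl x) (hne : ζl x ≠ ζ₀ x)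
    (hE : HasDerivAt E (-2 * ζl x * E x) x) :
    HasDerivAt (fun t => E t / (ζl t - ζ₀ t) ^ 2)
      (-2 * darbouxTransform ζ₀ ζl x * (E x / (ζl x - ζ₀ x) ^ 2)) x := by
  have hd : ζl x - ζ₀ x ≠ 0 := sub_ne_zero.mpr hne
  refine (hE.fun_div ((hl.hasDerivAt.fun_sub h₀.hasDerivAt).fun_pow 2)
    (pow_ne_zero 2 hd)).congr_deriv ?_
  rw [darbouxTransform]
  field_simp
  ring

theorem darboux_transformed_integrating_factor_general {U : Set 𝕜} (hU : IsOpen U)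
    {V ζ₀ ζl E : 𝕜 → F} {lam : F} (h₀ : IsRiccatiSolutionOn V ζ₀ U)
    (hl : IsRiccatiSolutionOn (fun x => V x - lam) ζl U) (hne : ∀ x ∈ U, ζl x ≠ ζ₀ x)
    (hE : ∀ x ∈ U, HasDerivAt E (-2 * ζl x * E x) x)
    (ζ : F) {x : 𝕜} (hx : x ∈ U) (hζ : ζ ≠ darbouxTransform ζ₀ ζl x) :
    IsIntegratingFactorAt (fun w t => darbouxPotential ζ₀ t - lam - w ^ 2)
      (fun w t => E t / ((ζl t - ζ₀ t) ^ 2 * (-w + darbouxTransform ζ₀ ζl t) ^ 2)) ζ x := by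
  have hweight := hasDerivAt_div_sub_sq_darbouxTransform (h₀ x hx).differentiableAt
    (hl x hx).differentiableAt (hne x hx) (hE x hx)
  simpa only [div_div] using
    isIntegratingFactorAt_riccati (h₀.darbouxTransform hU hl hne x hx) hweight hζ

end Darboux

/-- Proposition 3.4, integrating-factor item:
R⁺(ζ,x) = exp(−2G(x)) / ((ζ_λ(x) − ζ₀(x))²·(−ζ + ζ⁺_λ(x))²), with G' = ζ_λ,
is an integrating factor of the transformed vector field
X⁺ = (V₊ − λ − ζ²)·∂/∂ζ + ∂/∂x, where V₊ = −ζ₀' + ζ₀² and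
ζ⁺_λ = ζ_λ + (ζ_λ' − ζ₀')/(ζ_λ − ζ₀). -/
theorem darboux_transformed_integrating_factor
    (U : Set ℂ) (hU : IsOpen U) (V : ℂ → ℂ) (lam : ℂ)
    (hV : ∀ x ∈ U, DifferentiableAt ℂ V x)
    (ζ₀ : ℂ → ℂ)
    (hζ₀d1 : ∀ x ∈ U, DifferentiableAt ℂ ζ₀ x)
    (hζ₀d2 : ∀ x ∈ U, DifferentiableAt ℂ (deriv ζ₀) x)
    (hric₀ : ∀ x ∈ U, deriv ζ₀ x = V x - ζ₀ x ^ 2)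
    (ζl : ℂ → ℂ)
    (hζld1 : ∀ x ∈ U, DifferentiableAt ℂ ζl x)
    (hζld2 : ∀ x ∈ U, DifferentiableAt ℂ (deriv ζl) x)
    (hricl : ∀ x ∈ U, deriv ζl x = V x - lam - ζl x ^ 2)
    (hne : ∀ x ∈ U, ζl x ≠ ζ₀ x)
    (G : ℂ → ℂ)
    (hGd : ∀ x ∈ U, DifferentiableAt ℂ G x)
    (hG : ∀ x ∈ U, deriv G x = ζl x)
    (Vplus ζplus : ℂ → ℂ) (R : ℂ → ℂ → ℂ)
    (hVplus : ∀ x, Vplus x = -deriv ζ₀ x + ζ₀ x ^ 2)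
    (hζplus : ∀ x, ζplus x = ζl x + (deriv ζl x - deriv ζ₀ x) / (ζl x - ζ₀ x))
    (hR : ∀ ζ x, R ζ x =
      Complex.exp (-2 * G x) / ((ζl x - ζ₀ x) ^ 2 * (-ζ + ζplus x) ^ 2)) :
    ∀ (ζ : ℂ), ∀ x ∈ U, ζ ≠ ζplus x →
      deriv (fun w => R w x * (Vplus x - lam - w ^ 2)) ζ
        + deriv (fun t => R ζ t) x = 0 := by
  obtain rfl : Vplus = darbouxPotential ζ₀ := funext hVplus
  obtain rfl : ζplus = darbouxTransform ζ₀ ζl := funext hζplus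
  obtain rfl : R = _ := funext₂ hR
  have h₀ : IsRiccatiSolutionOn V ζ₀ U := fun x hx => hric₀ x hx ▸ (hζ₀d1 x hx).hasDerivAt
  have hl : IsRiccatiSolutionOn (fun x => V x - lam) ζl U :=
    fun x hx => hricl x hx ▸ (hζld1 x hx).hasDerivAt
  have hE : ∀ x ∈ U, HasDerivAt (fun t => Complex.exp (-2 * G t))
      (-2 * ζl x * Complex.exp (-2 * G x)) x := by
    intro x hx
    have hGx : HasDerivAt G (ζl x) x := hG x hx ▸ (hGd x hx).hasDerivAt
    exact (hGx.const_mul (-2)).cexp.congr_deriv (mul_comm _ _)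
  exact fun ζ x hx hζ => (darboux_transformed_integrating_factor_general
    hU h₀ hl hne hE ζ hx hζ).deriv_add_deriv_eq_zero
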